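/- Let F be a finite field of characteristic 2 with q = 2^k ≡ 2 or 8 (mod 15), and G = C_3 × D_10. Then U(FG) ≅ C_2^{3k} ⋊ (C_{2^k−1} × C_{2^{2k}−1} × GL(2, F₂)³), where F₂ is the degree-2 extension of F. -/

import Mathlib

/-!
Let `ω` be a primitive cube root of unity of the quadratic extension `K = F₂`; since `3 ∤ |F| - 1`,
it does not lie in `F`. Then `F[C₃] ≅ F × K`, so `F[C₃ × D₁₀] ≅ F[D₁₀] × K[D₁₀]`.

In characteristic `2` the traces `ω` and `ω²` satisfy `t + t' = -1 = t t'`, whence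
`X⁵ - 1 = (X - 1)(X² - ωX + 1)(X² - ω²X + 1)`. The factor `X - 1` gives a representation of `D₁₀` on
`L[ε]` with trivial rotations and reflections acting as `1 + ε`; a factor `X² - tX + 1` gives a two
dimensional representation whose rotations have trace `t`. An element of the group algebra is a pair
of polynomials of degree `< 5` (its coefficients at rotations and at reflections), and if these
representations kill it, then `X⁵ - 1` divides both. Comparing dimensions,
`K[D₁₀] ≅ K[ε] × M₂(K)²`, while over `F` the two traces are conjugate and `F[D₁₀] ≅ F[ε] × M₂(K)`.

The units of `L[ε]` are `(1 + cε)b` with `c ∈ L`, `b ∈ Lˣ`, so `U(FG)` is even a direct product.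
-/

open Polynomial DualNumber Matrix DihedralGroup

section ResiduePoly

variable {R : Type*} [CommRing R] {n : ℕ} [NeZero n]

/-- The polynomial `∑ f i Xⁱ`, with the residues `i` modulo `n` lifted to `0, …, n - 1`. -/
noncomputable def residuePoly (f : ZMod n → R) : R[X] :=
  ∑ i, monomial i.val (f i)

lemma coeff_residuePoly_val (f : ZMod n → R) (i : ZMod n) : (residuePoly f).coeff i.val = f i := by
  simp [residuePoly, coeff_monomial, (ZMod.val_injective n).eq_iff]

lemma degree_residuePoly_lt (f : ZMod n → R) : (residuePoly f).degree < n :=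
  (degree_sum_le _ _).trans_lt <| (Finset.sup_lt_iff (WithBot.bot_lt_coe n)).2 fun i _ ↦
    (degree_monomial_le _ _).trans_lt (Nat.cast_lt.2 i.val_lt)

lemma aeval_residuePoly {A : Type*} [Ring A] [Algebra R A] (x : A) (f : ZMod n → R) :
    aeval x (residuePoly f) = ∑ i, f i • x ^ i.val := by
  simp [residuePoly, aeval_monomial, Algebra.smul_def]

lemma eq_zero_of_X_pow_sub_one_dvd_residuePoly {f : ZMod n → R} (hdvd : X ^ n - 1 ∣ residuePoly f) :
    f = 0 := by
  nontriviality R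
  have hp : residuePoly f = 0 := by
    by_contra hne
    refine (monic_X_pow_sub_C (1 : R) (NeZero.ne n)).not_dvd_of_degree_lt hne ?_
      (by simpa using hdvd)
    rw [degree_X_pow_sub_C (NeZero.pos n)]
    exact degree_residuePoly_lt f
  funext i
  rw [← coeff_residuePoly_val f i, hp, coeff_zero, Pi.zero_apply]

end ResiduePoly

section CyclicAndDihedralHoms

variable {A : Type*} [Monoid A] {n : ℕ} [NeZero n] {x s : A}

lemma pow_val_add (hx : x ^ n = 1) (i j : ZMod n) : x ^ (i + j).val = x ^ i.val * x ^ j.val := by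
  rw [ZMod.val_add, ← pow_eq_pow_mod _ hx, pow_add]

lemma pow_mul_mul_pow (hxs : x * s * x = s) (k : ℕ) : x ^ k * s * x ^ k = s := by
  induction k with
  | zero => simp
  | succ k ih =>
    calc x ^ (k + 1) * s * x ^ (k + 1)
        = x ^ k * x * s * (x * x ^ k) := by rw [← pow_succ, ← pow_succ']
      _ = x ^ k * (x * s * x) * x ^ k := by simp only [mul_assoc]
      _ = s := by rw [hxs, ih]

lemma pow_val_mul_mul_pow_val (hx : x ^ n = 1) (hxs : x * s * x = s) (i j : ZMod n) :
    x ^ i.val * (s * x ^ j.val) = s * x ^ (j - i).val := by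
  rw [← add_sub_cancel i j, pow_val_add hx, add_sub_cancel_left, ← mul_assoc, ← mul_assoc,
    pow_mul_mul_pow hxs]

/-- The homomorphism from the cyclic group of order `n` sending the generator to `x`. -/
@[simps]
def cyclicHom (x : A) (hx : x ^ n = 1) : Multiplicative (ZMod n) →* A where
  toFun i := x ^ i.toAdd.val
  map_one' := by simp
  map_mul' i j := pow_val_add hx i.toAdd j.toAdd

/-- The homomorphism from the dihedral group of order `2n` sending the rotation `r 1` to `x` and the
reflection `sr 0` to `s`. -/
def dihedralHom (x s : A) (hx : x ^ n = 1) (hs : s * s = 1) (hxs : x * s * x = s) :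
    DihedralGroup n →* A where
  toFun
    | r i => x ^ i.val
    | sr i => s * x ^ i.val
  map_one' := by rw [one_def]; simp
  map_mul' := by
    rintro (i | i) (j | j)
    · exact pow_val_add hx i j
    · exact (pow_val_mul_mul_pow_val hx hxs i j).symm
    · simp only [sr_mul_r, pow_val_add hx, mul_assoc]
    · simp only [sr_mul_sr, mul_assoc]
      rw [pow_val_mul_mul_pow_val hx hxs, ← mul_assoc, hs, one_mul]

end CyclicAndDihedralHoms

section GroupAlgebraLifts

variable {F A : Type*} [CommRing F] [Ring A] [Algebra F A] {n : ℕ} [NeZero n] {x s : A}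

lemma lift_cyclicHom (hx : x ^ n = 1) (a : MonoidAlgebra F (Multiplicative (ZMod n))) :
    MonoidAlgebra.lift F A _ (cyclicHom x hx) a
      = aeval x (residuePoly fun i ↦ a.coeff (Multiplicative.ofAdd i)) := by
  rw [MonoidAlgebra.lift_apply, Finsupp.sum_fintype _ _ (by simp), aeval_residuePoly,
    ← Multiplicative.ofAdd.sum_comp]
  simp

/-- The coefficients of `a` at the rotations `r i`, as the polynomial `∑ a (r i) Xⁱ`. -/
noncomputable def rotationPart (a : MonoidAlgebra F (DihedralGroup n)) : F[X] :=
  residuePoly fun i ↦ a.coeff (r i)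

/-- The coefficients of `a` at the reflections `sr i`, as the polynomial `∑ a (sr i) Xⁱ`. -/
noncomputable def reflectionPart (a : MonoidAlgebra F (DihedralGroup n)) : F[X] :=
  residuePoly fun i ↦ a.coeff (sr i)

lemma lift_dihedralHom (hx : x ^ n = 1) (hs : s * s = 1) (hxs : x * s * x = s)
    (a : MonoidAlgebra F (DihedralGroup n)) :
    MonoidAlgebra.lift F A _ (dihedralHom x s hx hs hxs) a
      = aeval x (rotationPart a) + s * aeval x (reflectionPart a) := by
  rw [MonoidAlgebra.lift_apply, Finsupp.sum_fintype _ _ (by simp), rotationPart, reflectionPart,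
    aeval_residuePoly, aeval_residuePoly, Finset.mul_sum, ← equivSum.symm.sum_comp,
    Fintype.sum_sum_type]
  simp only [mul_smul_comm]
  rfl

lemma eq_zero_of_X_pow_sub_one_dvd_parts {a : MonoidAlgebra F (DihedralGroup n)}
    (hrot : X ^ n - 1 ∣ rotationPart a) (hrefl : X ^ n - 1 ∣ reflectionPart a) : a = 0 := by
  ext (i | i)
  · exact congrFun (eq_zero_of_X_pow_sub_one_dvd_residuePoly hrot) i
  · exact congrFun (eq_zero_of_X_pow_sub_one_dvd_residuePoly hrefl) i

end GroupAlgebraLifts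

section DualNumbers

instance finite_dualNumber (F L : Type*) [CommRing F] [CommRing L] [Algebra F L]
    [Module.Finite F L] : Module.Finite F L[ε] :=
  inferInstanceAs (Module.Finite F (L × L))

lemma finrank_dualNumber (F L : Type*) [CommRing F] [StrongRankCondition F] [CommRing L]
    [Algebra F L] [Module.Free F L] [Module.Finite F L] :
    Module.finrank F L[ε] = 2 * Module.finrank F L := by
  rw [two_mul, ← Module.finrank_prod (R := F) (M := L) (M' := L)]
  rfl

lemma one_add_eps_mul_self {L : Type*} [CommRing L] [CharP L 2] :
    (1 + ε : L[ε]) * (1 + ε) = 1 := by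
  have two_eq_zero : (2 : L[ε]) = 0 := by
    rw [← map_ofNat (algebraMap L L[ε]) 2, CharTwo.two_eq_zero, map_zero]
  linear_combination eps_mul_eps (R := L) + ε * two_eq_zero

/-- The representation of the dihedral group over a ring of characteristic two that is trivial on
rotations and sends every reflection to `1 + ε`. -/
def unipotentRep (L : Type*) [CommRing L] [CharP L 2] (n : ℕ) [NeZero n] :
    DihedralGroup n →* L[ε] :=
  dihedralHom 1 (1 + ε) (one_pow n) one_add_eps_mul_self (by simp)

lemma X_sub_one_dvd_of_lift_unipotentRep_eq_zero {L : Type*} [CommRing L] [CharP L 2] {n : ℕ}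
    [NeZero n] {a : MonoidAlgebra L (DihedralGroup n)}
    (ha : MonoidAlgebra.lift L L[ε] _ (unipotentRep L n) a = 0) :
    X - 1 ∣ rotationPart a ∧ X - 1 ∣ reflectionPart a := by
  have aeval_one (p : L[X]) : aeval (1 : L[ε]) p = TrivSqZeroExt.inl (p.eval 1) := by
    rw [← map_one (algebraMap L L[ε]), aeval_algebraMap_apply_eq_algebraMap_eval]; rfl
  rw [unipotentRep, lift_dihedralHom, aeval_one, aeval_one] at ha
  have hfst : (rotationPart a).eval 1 + (reflectionPart a).eval 1 = 0 := by
    simpa using congrArg TrivSqZeroExt.fst ha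
  have hrefl : (reflectionPart a).eval 1 = 0 := by simpa using congrArg TrivSqZeroExt.snd ha
  rw [← C_1, dvd_iff_isRoot, dvd_iff_isRoot]
  exact ⟨by rwa [hrefl, add_zero] at hfst, hrefl⟩

lemma fst_mul_fst_inv {L : Type*} [CommRing L] (u : L[ε]ˣ) : u.val.fst * u⁻¹.val.fst = 1 := by
  rw [← TrivSqZeroExt.fst_mul, u.mul_inv, TrivSqZeroExt.fst_one]

/-- A unit of the dual numbers is uniquely `(1 + c ε) b` with `b` a unit of `L`; it corresponds to
`(c, b)`. -/
def unitsDualNumberMulEquiv (L : Type*) [CommRing L] : L[ε]ˣ ≃* Multiplicative L × Lˣ where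
  toFun u :=
    (.ofAdd (u.val.snd * u⁻¹.val.fst), Units.map (TrivSqZeroExt.fstHom L L L).toMonoidHom u)
  invFun p :=
    { val := TrivSqZeroExt.inl (p.2 : L) + TrivSqZeroExt.inr (p.1.toAdd * p.2)
      inv := TrivSqZeroExt.inl (p.2⁻¹.val) - TrivSqZeroExt.inr (p.1.toAdd * p.2⁻¹.val)
      val_inv := by ext <;> simp [mul_left_comm (p.2 : L)]
      inv_val := by ext <;> simp [mul_left_comm (p.2⁻¹.val : L)] }
  left_inv u := by
    ext
    · simp
    · simp [mul_right_comm _ _ u.val.fst, mul_assoc, fst_mul_fst_inv]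
  right_inv p := by
    ext <;> simp [mul_assoc]
  map_mul' u v := by
    refine Prod.ext (congrArg Multiplicative.ofAdd ?_) (map_mul _ u v)
    simp only [_root_.mul_inv_rev, Units.val_mul, toAdd_ofAdd, TrivSqZeroExt.fst_mul,
      TrivSqZeroExt.snd_mul, smul_eq_mul, MulOpposite.smul_eq_mul_unop, MulOpposite.unop_op]
    linear_combination v.val.snd * v⁻¹.val.fst * fst_mul_fst_inv u
      + u.val.snd * u⁻¹.val.fst * fst_mul_fst_inv v

end DualNumbers

section RotationMatrix

/-- The characteristic polynomial of a plane rotation (determinant `1`) of trace `t`. -/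
noncomputable def rotationPoly {L : Type*} [CommRing L] (t : L) : L[X] := X ^ 2 - C t * X + 1

/-- The companion matrix of `rotationPoly t`, the image of `r 1` in the two-dimensional
representation of the dihedral group with rotation trace `t`. -/
def rotationMatrix {L : Type*} [CommRing L] (t : L) : Matrix (Fin 2) (Fin 2) L := !![0, -1; 1, t]

/-- The permutation matrix that inverts `rotationMatrix t` by conjugation, the image of `sr 0` in
the two-dimensional representations of the dihedral group. -/
def swapMatrix (L : Type*) [CommRing L] : Matrix (Fin 2) (Fin 2) L := !![0, 1; 1, 0]

variable {L : Type*} [CommRing L] (t : L)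

lemma rotationPoly_monic : (rotationPoly t).Monic := by
  unfold rotationPoly; monicity!

lemma natDegree_rotationPoly [Nontrivial L] : (rotationPoly t).natDegree = 2 := by
  unfold rotationPoly; compute_degree!

lemma map_rotationPoly {S : Type*} [CommRing S] (φ : L →+* S) :
    (rotationPoly t).map φ = rotationPoly (φ t) := by
  simp [rotationPoly]

lemma charpoly_rotationMatrix [Nontrivial L] : (rotationMatrix t).charpoly = rotationPoly t := by
  simp [charpoly_fin_two, rotationMatrix, rotationPoly]

lemma aeval_rotationMatrix_rotationPoly : aeval (rotationMatrix t) (rotationPoly t) = 0 := by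
  nontriviality L
  rw [← charpoly_rotationMatrix, aeval_self_charpoly]

lemma swapMatrix_mul_self : swapMatrix L * swapMatrix L = 1 := by
  simp [swapMatrix, one_fin_two]

lemma rotationMatrix_mul_swapMatrix_mul_rotationMatrix :
    rotationMatrix t * swapMatrix L * rotationMatrix t = swapMatrix L := by
  simp [rotationMatrix, swapMatrix]

variable {t}

lemma rotationMatrix_pow_eq_one {n : ℕ} (h : rotationPoly t ∣ X ^ n - 1) :
    rotationMatrix t ^ n = 1 := by
  simpa [sub_eq_zero] using
    aeval_eq_zero_of_dvd_aeval_eq_zero h (aeval_rotationMatrix_rotationPoly t)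

lemma aeval_rotationMatrix_linear (a b : L) :
    aeval (rotationMatrix t) (C a * X + C b) = !![b, -a; a, a * t + b] := by
  ext i j
  fin_cases i <;> fin_cases j <;>
    simp [rotationMatrix, algebraMap_matrix_apply, ← Algebra.smul_def]

variable {K : Type*} [Field K] {t : K}

lemma coeffs_eq_zero_of_rotation_add_swap_mul_rotation_eq_zero (ht : t ^ 2 ≠ 4) {a b c d : K}
    (h : aeval (rotationMatrix t) (C a * X + C b)
      + swapMatrix K * aeval (rotationMatrix t) (C c * X + C d) = 0) :
    (a = 0 ∧ b = 0) ∧ c = 0 ∧ d = 0 := by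
  rw [aeval_rotationMatrix_linear, aeval_rotationMatrix_linear, swapMatrix, ← Matrix.ext_iff] at h
  have h00 : b + c = 0 := by simpa using h 0 0
  have h01 : -a + (c * t + d) = 0 := by simpa using h 0 1
  have h10 : a + d = 0 := by simpa using h 1 0
  have h11 : a * t + b + -c = 0 := by simpa using h 1 1
  have hdisc : t ^ 2 - 4 ≠ 0 := sub_ne_zero.2 ht
  have ha : a = 0 := (mul_eq_zero_iff_left hdisc).1 <| by
    linear_combination t * (h11 - h00) + 2 * (h01 - h10)
  have hc : c = 0 := (mul_eq_zero_iff_left hdisc).1 <| by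
    linear_combination t * (h01 - h10) + 2 * (h11 - h00)
  exact ⟨⟨ha, by linear_combination h00 - hc⟩, hc, by linear_combination h10 - ha⟩

lemma rotationPoly_dvd_of_aeval_add_swap_mul_aeval_eq_zero (ht : t ^ 2 ≠ 4) {p q : K[X]}
    (h : aeval (rotationMatrix t) p + swapMatrix K * aeval (rotationMatrix t) q = 0) :
    rotationPoly t ∣ p ∧ rotationPoly t ∣ q := by
  have exists_modByMonic_eq (f : K[X]) : ∃ a b, f %ₘ rotationPoly t = C a * X + C b := by
    refine exists_eq_X_add_C_of_natDegree_le_one (Nat.le_of_lt_succ ?_)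
    refine (natDegree_modByMonic_lt f (rotationPoly_monic t) fun h ↦ ?_).trans_eq
      (natDegree_rotationPoly t)
    simpa [h] using natDegree_rotationPoly t
  obtain ⟨a, b, hp⟩ := exists_modByMonic_eq p
  obtain ⟨c, d, hq⟩ := exists_modByMonic_eq q
  rw [← aeval_modByMonic_eq_self_of_root (p := p) (aeval_rotationMatrix_rotationPoly t),
    ← aeval_modByMonic_eq_self_of_root (p := q) (aeval_rotationMatrix_rotationPoly t), hp, hq] at h
  obtain ⟨⟨rfl, rfl⟩, rfl, rfl⟩ := coeffs_eq_zero_of_rotation_add_swap_mul_rotation_eq_zero ht h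
  simp [← modByMonic_eq_zero_iff_dvd (rotationPoly_monic t), hp, hq]

end RotationMatrix

section FifthRootsOfUnity

lemma X_pow_five_sub_one_eq {L : Type*} [CommRing L] {t t' : L} (hadd : t + t' = -1)
    (hmul : t * t' = -1) :
    (X ^ 5 - 1 : L[X]) = (X - 1) * (rotationPoly t * rotationPoly t') := by
  have hadd := congrArg C hadd
  have hmul := congrArg C hmul
  simp only [map_add, map_mul, map_neg, map_one] at hadd hmul
  unfold rotationPoly
  linear_combination (X - 1) * (X ^ 3 + X) * hadd - (X - 1) * X ^ 2 * hmul

variable {F K : Type*} [Field F] [Field K] {t t' : K}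

lemma rotationPoly_dvd_X_pow_five_sub_one (hadd : t + t' = -1) (hmul : t * t' = -1) :
    rotationPoly t ∣ X ^ 5 - 1 :=
  X_pow_five_sub_one_eq hadd hmul ▸ (dvd_mul_right _ _).mul_left _

lemma X_pow_five_sub_one_dvd (h5 : (5 : K) ≠ 0) (hadd : t + t' = -1) (hmul : t * t' = -1)
    {p : K[X]} (h1 : X - 1 ∣ p) (ht : rotationPoly t ∣ p) (ht' : rotationPoly t' ∣ p) :
    X ^ 5 - 1 ∣ p := by
  have hsep : (X ^ 5 - 1 : K[X]).Separable := X_pow_sub_one_separable_iff.2 (mod_cast h5)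
  rw [X_pow_five_sub_one_eq hadd hmul] at hsep ⊢
  exact hsep.isCoprime.mul_dvd h1 (hsep.of_mul_right.isCoprime.mul_dvd ht ht')

lemma X_pow_five_sub_one_dvd_of_conj [Algebra F K] (h5 : (5 : K) ≠ 0) (σ : K →ₐ[F] K)
    (hadd : t + σ t = -1) (hmul : t * σ t = -1) {p : F[X]} (h1 : X - 1 ∣ p)
    (ht : rotationPoly t ∣ p.map (algebraMap F K)) : X ^ 5 - 1 ∣ p := by
  have hσt : rotationPoly (σ t) ∣ p.map (algebraMap F K) := by
    have := Polynomial.map_dvd (σ : K →+* K) ht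
    rwa [map_rotationPoly, Polynomial.map_map, σ.comp_algebraMap] at this
  have h1K : X - 1 ∣ p.map (algebraMap F K) := by
    simpa using Polynomial.map_dvd (algebraMap F K) h1
  rw [← Polynomial.map_dvd_map' (algebraMap F K)]
  simpa using X_pow_five_sub_one_dvd h5 hadd hmul h1K ht hσt

lemma five_ne_zero_of_charTwo (K : Type*) [Field K] [CharP K 2] : (5 : K) ≠ 0 := by
  exact_mod_cast mt (CharP.cast_eq_zero_iff K 2 5).1 (by decide)

lemma sq_ne_four_of_add_eq_of_mul_eq (h5 : (5 : K) ≠ 0) (hadd : t + t' = -1)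
    (hmul : t * t' = -1) : t ^ 2 ≠ 4 := by
  intro h4
  have hquad : t ^ 2 + t - 1 = 0 := by linear_combination t * hadd - hmul
  exact h5 (by linear_combination (3 - t) * hquad + (t - 2) * h4)

end FifthRootsOfUnity

section AlgebraEquivs

lemma finrank_monoidAlgebra (F G : Type*) [CommRing F] [StrongRankCondition F] :
    Module.finrank F (MonoidAlgebra F G) = Nat.card G :=
  Module.finrank_eq_nat_card_basis (MonoidAlgebra.basis G F)

lemma algHom_bijective_of_injective {F A B : Type*} [Field F] [Ring A] [Ring B] [Algebra F A]
    [Algebra F B] [Module.Finite F A] [Module.Finite F B] {f : A →ₐ[F] B}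
    (hf : Function.Injective f) (hrank : Module.finrank F A = Module.finrank F B) :
    Function.Bijective f :=
  ⟨hf, (LinearMap.injective_iff_surjective_of_finrank_eq_finrank (f := f.toLinearMap) hrank).1 hf⟩

/-- The monoid algebra over a product of coefficient rings is the product of the monoid algebras. -/
noncomputable def monoidAlgebraProdEquiv (F A B H : Type*) [CommSemiring F] [Semiring A]
    [Semiring B] [Algebra F A] [Algebra F B] [Monoid H] :
    MonoidAlgebra (A × B) H ≃ₐ[F] MonoidAlgebra A H × MonoidAlgebra B H :=
  AlgEquiv.ofBijective
    ((MonoidAlgebra.mapAlgHom H (AlgHom.fst F A B)).prod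
      (MonoidAlgebra.mapAlgHom H (AlgHom.snd F A B))) <| by
    constructor
    · intro x y hxy
      obtain ⟨hA, hB⟩ := Prod.ext_iff.1 hxy
      ext h
      · simpa using congrArg (fun z ↦ z.coeff h) hA
      · simpa using congrArg (fun z ↦ z.coeff h) hB
    · rintro ⟨x, y⟩
      refine ⟨MonoidAlgebra.map (AddMonoidHom.inl A B) x
        + MonoidAlgebra.map (AddMonoidHom.inr A B) y, ?_⟩
      ext h <;> simp

end AlgebraEquivs

section CubeRootOfUnity

variable {F K : Type*} [Field F] [Field K] [Algebra F K] {ω : K}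

lemma sq_add_self_add_one_eq_zero (hω : ω ^ 3 = 1) (h1 : ω ≠ 1) : ω ^ 2 + ω + 1 = 0 :=
  (mul_eq_zero.1 (by linear_combination hω : (ω - 1) * (ω ^ 2 + ω + 1) = 0)).resolve_left
    (sub_ne_zero.2 h1)

lemma minpoly_eq_X_sq_add_X_add_one (hω : ω ^ 3 = 1) (hωF : ω ∉ (algebraMap F K).range) :
    minpoly F ω = X ^ 2 + X + 1 := by
  have hroot : ω ^ 2 + ω + 1 = 0 :=
    sq_add_self_add_one_eq_zero hω fun h ↦ hωF (h ▸ one_mem _)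
  have hint : IsIntegral F ω := .of_pow three_pos (hω ▸ isIntegral_one)
  have hdeg : (X ^ 2 + X + 1 : F[X]).natDegree = 2 := by compute_degree!
  refine (eq_of_monic_of_dvd_of_natDegree_le (minpoly.monic hint) (by monicity!)
    (minpoly.dvd F ω (by simpa using hroot)) ?_).symm
  rw [hdeg]
  exact (minpoly.two_le_natDegree_iff hint).2 hωF

lemma exists_algEquiv_apply_eq_sq [Normal F K] (hω : ω ^ 3 = 1)
    (hωF : ω ∉ (algebraMap F K).range) : ∃ σ : K ≃ₐ[F] K, σ ω = ω ^ 2 := by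
  refine minpoly.exists_algEquiv_of_root' (Algebra.IsAlgebraic.isAlgebraic ω) ?_
  have hroot : ω ^ 2 + ω + 1 = 0 :=
    sq_add_self_add_one_eq_zero hω fun h ↦ hωF (h ▸ one_mem _)
  rw [minpoly_eq_X_sq_add_X_add_one hω hωF]
  simp only [map_add, map_pow, aeval_X, map_one]
  linear_combination hroot + ω * hω

lemma X_pow_three_sub_one_dvd (hω : ω ^ 3 = 1) (hωF : ω ∉ (algebraMap F K).range)
    {p : F[X]} (h1 : aeval (1 : F) p = 0) (hpω : aeval ω p = 0) : X ^ 3 - 1 ∣ p := by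
  have hmin := minpoly_eq_X_sq_add_X_add_one hω hωF
  have hint : IsIntegral F ω := .of_pow three_pos (hω ▸ isIntegral_one)
  have hcop : IsCoprime (minpoly F ω) (X - C 1) := by
    refine (minpoly.irreducible hint).coprime_iff_not_dvd.2 fun h ↦ hωF ?_
    have hω1 : ω = 1 := by simpa [sub_eq_zero] using minpoly.dvd_iff.1 h
    exact hω1 ▸ one_mem _
  have hprod := hcop.mul_dvd (minpoly.dvd F ω hpω) (dvd_iff_isRoot.2 (by simpa using h1))
  rw [hmin, C_1] at hprod
  convert hprod using 1
  ring

variable (F K) in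
lemma exists_cube_eq_one_notMem_range [Fintype F] [Algebra.IsQuadraticExtension F K]
    (hF : Fintype.card F % 3 = 2) :
    ∃ ω : K, ω ^ 3 = 1 ∧ ω ∉ (algebraMap F K).range := by
  have : Finite K := Module.finite_of_finite F
  have hK : Nat.card K = Fintype.card F ^ 2 := by
    rw [Module.natCard_eq_pow_finrank (K := F), Nat.card_eq_fintype_card,
      Algebra.IsQuadraticExtension.finrank_eq_two]
  have hdvd : 3 ∣ Nat.card Kˣ := by
    rw [Nat.card_units, hK, ← Nat.modEq_iff_dvd' (Nat.one_le_pow _ _ Fintype.card_pos)]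
    exact (Nat.ModEq.pow 2 (show Fintype.card F ≡ 2 [MOD 3] from hF)).symm
  obtain ⟨ω, hω⟩ := exists_prime_orderOf_dvd_card' 3 hdvd
  refine ⟨ω, by rw [← Units.val_pow_eq_pow_val, ← hω, pow_orderOf_eq_one, Units.val_one], ?_⟩
  rintro ⟨x, hx⟩
  have hx3 : orderOf x = 3 := by
    rw [← hω, ← orderOf_units, ← hx]
    exact (orderOf_injective (algebraMap F K : F →* K) (algebraMap F K).injective x).symm
  have hx0 : x ≠ 0 := by rintro rfl; simp at hx3
  have hdvd_pred : 3 ∣ Fintype.card F - 1 :=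
    hx3 ▸ orderOf_dvd_of_pow_eq_one (FiniteField.pow_card_sub_one_eq_one x hx0)
  lia

end CubeRootOfUnity

section TwoDimensionalRepresentations

variable {F K : Type*} [CommRing F] [Field K] [Algebra F K] {n : ℕ} [NeZero n] {t : K}

/-- The two-dimensional representation of the dihedral group with rotation trace `t`. -/
def matrixRep (ht : rotationPoly t ∣ X ^ n - 1) :
    DihedralGroup n →* Matrix (Fin 2) (Fin 2) K :=
  dihedralHom (rotationMatrix t) (swapMatrix K) (rotationMatrix_pow_eq_one ht) swapMatrix_mul_self
    (rotationMatrix_mul_swapMatrix_mul_rotationMatrix t)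

lemma rotationPoly_dvd_of_lift_matrixRep_eq_zero (hdvd : rotationPoly t ∣ X ^ n - 1)
    (ht : t ^ 2 ≠ 4) {a : MonoidAlgebra F (DihedralGroup n)}
    (ha : MonoidAlgebra.lift F _ _ (matrixRep hdvd) a = 0) :
    rotationPoly t ∣ (rotationPart a).map (algebraMap F K) ∧
      rotationPoly t ∣ (reflectionPart a).map (algebraMap F K) := by
  rw [matrixRep, lift_dihedralHom, ← aeval_map_algebraMap K _ (rotationPart a),
    ← aeval_map_algebraMap K _ (reflectionPart a)] at ha
  exact rotationPoly_dvd_of_aeval_add_swap_mul_aeval_eq_zero ht ha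

end TwoDimensionalRepresentations

section DihedralGroupFive

variable {F K : Type*} [Field F] [Field K] {t t' : K}

lemma nonempty_monoidAlgebra_dihedralGroup_five_algEquiv_of_split [CharP K 2]
    (hadd : t + t' = -1) (hmul : t * t' = -1) :
    Nonempty (MonoidAlgebra K (DihedralGroup 5) ≃ₐ[K]
      K[ε] × Matrix (Fin 2) (Fin 2) K × Matrix (Fin 2) (Fin 2) K) := by
  have h5 := five_ne_zero_of_charTwo K
  have hadd' : t' + t = -1 := add_comm t t' ▸ hadd
  have hmul' : t' * t = -1 := mul_comm t t' ▸ hmul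
  have hdvd := rotationPoly_dvd_X_pow_five_sub_one hadd hmul
  have hdvd' := rotationPoly_dvd_X_pow_five_sub_one hadd' hmul'
  let f := (MonoidAlgebra.lift K K[ε] _ (unipotentRep K 5)).prod
    ((MonoidAlgebra.lift K _ _ (matrixRep hdvd)).prod (MonoidAlgebra.lift K _ _ (matrixRep hdvd')))
  have hf : Function.Injective f := by
    refine (injective_iff_map_eq_zero f).2 fun a ha ↦ ?_
    simp only [f, AlgHom.prod_apply, Prod.mk_eq_zero] at ha
    obtain ⟨hrot₁, hrefl₁⟩ := X_sub_one_dvd_of_lift_unipotentRep_eq_zero ha.1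
    obtain ⟨hrot, hrefl⟩ := rotationPoly_dvd_of_lift_matrixRep_eq_zero hdvd
      (sq_ne_four_of_add_eq_of_mul_eq h5 hadd hmul) ha.2.1
    obtain ⟨hrot', hrefl'⟩ := rotationPoly_dvd_of_lift_matrixRep_eq_zero hdvd'
      (sq_ne_four_of_add_eq_of_mul_eq h5 hadd' hmul') ha.2.2
    rw [Algebra.algebraMap_self, Polynomial.map_id] at hrot hrefl hrot' hrefl'
    exact eq_zero_of_X_pow_sub_one_dvd_parts
      (X_pow_five_sub_one_dvd h5 hadd hmul hrot₁ hrot hrot')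
      (X_pow_five_sub_one_dvd h5 hadd hmul hrefl₁ hrefl hrefl')
  refine ⟨.ofBijective f (algHom_bijective_of_injective hf ?_)⟩
  simp [finrank_monoidAlgebra, finrank_dualNumber, Module.finrank_matrix, DihedralGroup.card]

lemma nonempty_monoidAlgebra_dihedralGroup_five_algEquiv_of_conj [CharP F 2] [Algebra F K]
    [Algebra.IsQuadraticExtension F K] (σ : K →ₐ[F] K) (hadd : t + σ t = -1)
    (hmul : t * σ t = -1) :
    Nonempty (MonoidAlgebra F (DihedralGroup 5) ≃ₐ[F] F[ε] × Matrix (Fin 2) (Fin 2) K) := by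
  have : CharP K 2 := charP_of_injective_algebraMap (algebraMap F K).injective 2
  have h5 := five_ne_zero_of_charTwo K
  have hdvd := rotationPoly_dvd_X_pow_five_sub_one hadd hmul
  let f := (MonoidAlgebra.lift F F[ε] _ (unipotentRep F 5)).prod
    (MonoidAlgebra.lift F _ _ (matrixRep hdvd))
  have hf : Function.Injective f := by
    refine (injective_iff_map_eq_zero f).2 fun a ha ↦ ?_
    simp only [f, AlgHom.prod_apply, Prod.mk_eq_zero] at ha
    obtain ⟨hrot₁, hrefl₁⟩ := X_sub_one_dvd_of_lift_unipotentRep_eq_zero ha.1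
    obtain ⟨hrot, hrefl⟩ := rotationPoly_dvd_of_lift_matrixRep_eq_zero hdvd
      (sq_ne_four_of_add_eq_of_mul_eq h5 hadd hmul) ha.2
    exact eq_zero_of_X_pow_sub_one_dvd_parts
      (X_pow_five_sub_one_dvd_of_conj h5 σ hadd hmul hrot₁ hrot)
      (X_pow_five_sub_one_dvd_of_conj h5 σ hadd hmul hrefl₁ hrefl)
  refine ⟨.ofBijective f (algHom_bijective_of_injective hf ?_)⟩
  simp [finrank_monoidAlgebra, finrank_dualNumber, Module.finrank_matrix, DihedralGroup.card,
    Algebra.IsQuadraticExtension.finrank_eq_two F K]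

end DihedralGroupFive

section CyclicGroupThree

variable {F K : Type*} [Field F] [Field K] [Algebra F K] [Algebra.IsQuadraticExtension F K] {ω : K}

lemma nonempty_monoidAlgebra_zmod_three_algEquiv (hω : ω ^ 3 = 1)
    (hωF : ω ∉ (algebraMap F K).range) :
    Nonempty (MonoidAlgebra F (Multiplicative (ZMod 3)) ≃ₐ[F] F × K) := by
  let f := (MonoidAlgebra.lift F F _ (cyclicHom (n := 3) 1 (one_pow 3))).prod
    (MonoidAlgebra.lift F K _ (cyclicHom ω hω))
  have hf : Function.Injective f := by
    refine (injective_iff_map_eq_zero f).2 fun a ha ↦ ?_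
    simp only [f, AlgHom.prod_apply, Prod.mk_eq_zero, lift_cyclicHom] at ha
    ext i
    exact congrFun (eq_zero_of_X_pow_sub_one_dvd_residuePoly
      (X_pow_three_sub_one_dvd hω hωF ha.1 ha.2)) i.toAdd
  refine ⟨.ofBijective f (algHom_bijective_of_injective hf ?_)⟩
  simp [finrank_monoidAlgebra, Algebra.IsQuadraticExtension.finrank_eq_two F K]

lemma nonempty_monoidAlgebra_zmod_three_prod_algEquiv (H : Type*) [Monoid H] (hω : ω ^ 3 = 1)
    (hωF : ω ∉ (algebraMap F K).range) :
    Nonempty (MonoidAlgebra F (Multiplicative (ZMod 3) × H) ≃ₐ[F]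
      MonoidAlgebra F H × MonoidAlgebra K H) := by
  obtain ⟨e⟩ := nonempty_monoidAlgebra_zmod_three_algEquiv hω hωF
  exact ⟨(MonoidAlgebra.domCongr F F MulEquiv.prodComm).trans <|
    (MonoidAlgebra.curryAlgEquiv F).trans <|
    (MonoidAlgebra.mapAlgEquiv F H e).trans (monoidAlgebraProdEquiv F F K H)⟩

end CyclicGroupThree

section UnitGroups

/-- Collects the factors of two unit groups, moving the three copies of `H` into one power. -/
def collectFactors (A A' B B' H : Type*) [Group A] [Group A'] [Group B] [Group B'] [Group H] :
    ((A × A') × H) × ((B × B') × H × H) ≃* (A × B) × A' × B' × (Fin 3 → H) where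
  toFun p := ((p.1.1.1, p.2.1.1), p.1.1.2, p.2.1.2, ![p.1.2, p.2.2.1, p.2.2.2])
  invFun p := (((p.1.1, p.2.1), p.2.2.2 0), (p.1.2, p.2.2.1), p.2.2.2 1, p.2.2.2 2)
  left_inv _ := rfl
  right_inv p := by
    ext i <;> [rfl; rfl; rfl; rfl; fin_cases i <;> rfl]
  map_mul' p q := by
    ext i <;> [rfl; rfl; rfl; rfl; fin_cases i <;> rfl]

lemma nonempty_multiplicative_mulEquiv_of_card {V : Type*} {p m : ℕ} [Fact p.Prime]
    [AddCommGroup V] [Module (ZMod p) V] (hcard : Nat.card V = p ^ m) :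
    Nonempty (Multiplicative V ≃* (Fin m → Multiplicative (ZMod p))) := by
  have : Finite V := Nat.finite_of_card_ne_zero (hcard ▸ pow_ne_zero m (NeZero.ne p))
  have hrank : Module.finrank (ZMod p) V = m :=
    Nat.pow_right_injective (Fact.out : p.Prime).two_le <| by
      simpa [hcard] using (Module.natCard_eq_pow_finrank (K := ZMod p) (V := V)).symm
  exact ⟨(Module.finBasisOfFinrankEq _ _ hrank).equivFun.toAddEquiv.toMultiplicative.trans
    (MulEquiv.funMultiplicative _ _)⟩

lemma nonempty_units_mulEquiv_of_card {L : Type*} [Field L] [Finite L] {m : ℕ}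
    (hcard : Nat.card L = m) : Nonempty (Lˣ ≃* Multiplicative (ZMod (m - 1))) :=
  ⟨mulEquivOfCyclicCardEq <| by
    rw [Nat.card_units, hcard, Nat.card_congr Multiplicative.toAdd, Nat.card_zmod]⟩

lemma nonempty_mulEquiv_semidirectProduct_of_card {F K : Type*} [Field F] [Fintype F]
    [CharP F 2] [Field K] [Algebra F K] [Algebra.IsQuadraticExtension F K] {k : ℕ}
    (hF : Fintype.card F = 2 ^ k) (H : Type*) [Group H] :
    Nonempty (Multiplicative (F × K) × Fˣ × Kˣ × H ≃*
      (Fin (3 * k) → Multiplicative (ZMod 2)) ⋊[(1 : _ →* MulAut _)]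
        (Multiplicative (ZMod (2 ^ k - 1)) × Multiplicative (ZMod (2 ^ (2 * k) - 1)) × H)) := by
  have : Finite K := Module.finite_of_finite F
  have : CharP K 2 := charP_of_injective_algebraMap (algebraMap F K).injective 2
  let : Algebra (ZMod 2) F := ZMod.algebra F 2
  let : Algebra (ZMod 2) K := ZMod.algebra K 2
  have hcardF : Nat.card F = 2 ^ k := by rw [Nat.card_eq_fintype_card, hF]
  have hcardK : Nat.card K = 2 ^ (2 * k) := by
    rw [Module.natCard_eq_pow_finrank (K := F), hcardF,
      Algebra.IsQuadraticExtension.finrank_eq_two, ← pow_mul, mul_comm]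
  have hcard : Nat.card (F × K) = 2 ^ (3 * k) := by
    rw [Nat.card_prod, hcardF, hcardK]; ring
  obtain ⟨eAdd⟩ := nonempty_multiplicative_mulEquiv_of_card (p := 2) hcard
  obtain ⟨eF⟩ := nonempty_units_mulEquiv_of_card hcardF
  obtain ⟨eK⟩ := nonempty_units_mulEquiv_of_card hcardK
  exact ⟨(eAdd.prodCongr (eF.prodCongr (eK.prodCongr (.refl H)))).trans
    SemidirectProduct.mulEquivProd.symm⟩

end UnitGroups

theorem stmt_9_general {F K : Type*} [Field F] [CharP F 2] [Field K] [Algebra F K]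
    [Algebra.IsQuadraticExtension F K] {ω : K} (hω : ω ^ 3 = 1)
    (hωF : ω ∉ (algebraMap F K).range) :
    Nonempty ((MonoidAlgebra F (Multiplicative (ZMod 3) × DihedralGroup 5))ˣ ≃*
      Multiplicative (F × K) × Fˣ × Kˣ × (Fin 3 → GL (Fin 2) K)) := by
  have : CharP K 2 := charP_of_injective_algebraMap (algebraMap F K).injective 2
  have hroot : ω ^ 2 + ω + 1 = 0 :=
    sq_add_self_add_one_eq_zero hω fun h ↦ hωF (h ▸ one_mem _)
  have hadd : ω + ω ^ 2 = -1 := by linear_combination hroot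
  have hmul : ω * ω ^ 2 = -1 := by rw [CharTwo.neg_eq, ← hω]; ring
  obtain ⟨σ, hσ⟩ := exists_algEquiv_apply_eq_sq hω hωF
  obtain ⟨e⟩ := nonempty_monoidAlgebra_zmod_three_prod_algEquiv (DihedralGroup 5) hω hωF
  obtain ⟨eF⟩ := nonempty_monoidAlgebra_dihedralGroup_five_algEquiv_of_conj (t := ω)
    σ.toAlgHom (by simpa [hσ]) (by simpa [hσ])
  obtain ⟨eK⟩ := nonempty_monoidAlgebra_dihedralGroup_five_algEquiv_of_split hadd hmul
  let unitsF := (Units.mapEquiv eF.toMulEquiv).trans MulEquiv.prodUnits |>.trans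
    ((unitsDualNumberMulEquiv F).prodCongr (.refl _))
  let unitsK := (Units.mapEquiv eK.toMulEquiv).trans MulEquiv.prodUnits |>.trans
    ((unitsDualNumberMulEquiv K).prodCongr MulEquiv.prodUnits)
  exact ⟨(Units.mapEquiv e.toMulEquiv).trans MulEquiv.prodUnits |>.trans
    (unitsF.prodCongr unitsK) |>.trans (collectFactors _ _ _ _ _) |>.trans
    ((MulEquiv.prodMultiplicative F K).symm.prodCongr (.refl _))⟩

/-- For `F` a finite field with `2^k` elements, `2^k ≡ 2, 8 (mod 15)`, `F₂` the quadratic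
extension of `F`, and `G = C₃ × D₁₀`, the unit group of `FG` is isomorphic to
`C₂^(3k) ⋊ (C_{2^k-1} × C_{2^(2k)-1} × GL(2,F₂)³)`. -/
theorem stmt_9 (F : Type) [Field F] [Fintype F] (k : ℕ) (hk : 0 < k)
    (hchar : CharP F 2) (hcard : Fintype.card F = 2 ^ k)
    (hq : 2 ^ k % 15 = 2 ∨ 2 ^ k % 15 = 8)
    (K : Type) [Field K] [Algebra F K] (hK : Module.finrank F K = 2) :
    let G := Multiplicative (ZMod 3) × DihedralGroup 5
    ∃ φ : (Multiplicative (ZMod (2 ^ k - 1)) × Multiplicative (ZMod (2 ^ (2 * k) - 1))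
            × (Fin 3 → GL (Fin 2) K)) →*
          MulAut (Fin (3 * k) → Multiplicative (ZMod 2)),
      Nonempty ((MonoidAlgebra F G)ˣ ≃*
        (Fin (3 * k) → Multiplicative (ZMod 2)) ⋊[φ]
          (Multiplicative (ZMod (2 ^ k - 1)) × Multiplicative (ZMod (2 ^ (2 * k) - 1))
            × (Fin 3 → GL (Fin 2) K))) := by
  have : Algebra.IsQuadraticExtension F K := { finrank_eq_two' := hK }
  obtain ⟨ω, hω, hωF⟩ := exists_cube_eq_one_notMem_range F K (by lia)
  obtain ⟨e⟩ := stmt_9_general hω hωF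
  obtain ⟨e'⟩ := nonempty_mulEquiv_semidirectProduct_of_card (K := K) hcard (Fin 3 → GL (Fin 2) K)
  exact ⟨1, ⟨e.trans e'⟩⟩
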